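/- Let ε ∈ (0,1) be a quadratic irrational (a Sturm number) whose conjugate satisfies ε′ < 0. Let q ≥ 1 be an integer and let l, c satisfy max(ε, 1−ε) < l < 1, c ≤ 0 < c + l, and q·l ∈ ℤ[ε], q·c ∈ ℤ[ε]. Let Λ = p + rε (p, r ∈ ℚ) with conjugate Λ′ = p + rε′ satisfy: Λ·Λ′ ∈ {1, −1}, Λ + Λ′ ∈ ℤ, Λ > 1, Λ′ ∈ (0,1), Λ·ℤ[ε] = ℤ[ε], and Λ′·((i + jε)/q + ℤ[ε]) = (i + jε)/q + ℤ[ε] for all integers i, j. Let T be the associated exchange of three intervals on [c, c+l) and J := [Λ′c, Λ′(c+l)). Then for every z₀ ∈ (1/q)·ℤ[ε] ∩ [c, c+l): the point Λ′z₀ is the ancestor of z₀ in J if and only if z₀′ ≤ 0 ≤ (T(z₀))′, where for z = s + tε (s, t ∈ ℚ) one writes z′ = s + tε′, and (T(z₀))′ equals z₀′ + 1 − ε′, z₀′ + 1 − 2ε′, or z₀′ − ε′ according as z₀ ∈ [c, c+l−1+ε), [c+l−1+ε, c+ε), or [c+ε, c+l). -/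

import Mathlib

/-- The set `ℤ[ε] = {a + bε : a, b ∈ ℤ}`. -/
def Zbr (ε : ℝ) : Set ℝ := {x | ∃ a b : ℤ, x = (a : ℝ) + (b : ℝ) * ε}

/-- The exchange of three intervals on `[c, c+l)` with parameters `ε, l, c`. -/
noncomputable def T3 (ε l c : ℝ) (x : ℝ) : ℝ :=
  if x < c + l - 1 + ε then x + 1 - ε
  else if x < c + ε then x + 1 - 2 * ε
  else x - ε

/-- `z` is the ancestor of `y` in the interval `J`, for the 3iet `T3 ε l c`. -/
def IsAncestor (ε l c : ℝ) (J : Set ℝ) (y z : ℝ) : Prop :=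
  z ∈ J ∧ ∃ k : ℕ, (T3 ε l c)^[k] z = y ∧
    ∀ j : ℕ, 1 ≤ j → j ≤ k → (T3 ε l c)^[j] z ∉ J

/-- The translation used by `T3` at `x`, with the parameter `e` in place of `ε` in the value. -/
noncomputable def stepD (ε l c e x : ℝ) : ℝ :=
  if x < c + l - 1 + ε then 1 - e
  else if x < c + ε then 1 - 2 * e
  else - e

lemma T3_eq (ε l c x : ℝ) : T3 ε l c x = x + stepD ε l c ε x := by
  unfold T3 stepD; split_ifs <;> ring

lemma stepD_int (ε l c x : ℝ) : ∃ a b : ℤ, ∀ e : ℝ, stepD ε l c e x = a + b * e := by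
  by_cases h1 : x < c + l - 1 + ε
  · exact ⟨1, -1, fun e => by simp [stepD, h1]; ring⟩
  · by_cases h2 : x < c + ε
    · exact ⟨1, -2, fun e => by simp [stepD, h1, h2]; ring⟩
    · exact ⟨0, -1, fun e => by simp [stepD, h1, h2]⟩

lemma stepD_ge (ε l c e x : ℝ) (he : e < 0) : -e ≤ stepD ε l c e x := by
  unfold stepD; split_ifs <;> linarith

lemma T3_mem (ε l c x : ℝ) (h1 : ε < l) (h2 : 1 - ε < l) (hl : l < 1)
    (hx : x ∈ Set.Ico c (c + l)) : T3 ε l c x ∈ Set.Ico c (c + l) := by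
  obtain ⟨hx1, hx2⟩ := hx
  unfold T3; split_ifs <;> constructor <;> linarith

/-- Sign analysis of a lattice vector with short first coordinate. -/
lemma signs (ε e : ℝ) (hε0 : 0 < ε) (hε1 : ε < 1) (he : e < 0) (a b : ℤ)
    (h1 : (a : ℝ) + b * ε < 1) (h2 : -1 < (a : ℝ) + b * ε) (h : 0 ≤ (a : ℝ) + b * e) :
    0 ≤ a ∧ 0 ≤ -a - b := by
  constructor
  · by_contra! hn
    have ha : (a : ℝ) ≤ -1 := by exact_mod_cast (by omega : a ≤ -1)
    have hb : b ≤ 0 := by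
      by_contra! hb
      have : (1 : ℝ) ≤ b := by exact_mod_cast hb
      nlinarith
    have hb' : (b : ℝ) ≤ 0 := by exact_mod_cast hb
    nlinarith
  · by_contra! hn
    have hn' : (1 : ℝ) ≤ a + b := by exact_mod_cast (by omega : 1 ≤ a + b)
    by_cases ha : 1 ≤ a
    · have ha' : (1 : ℝ) ≤ a := by exact_mod_cast ha
      nlinarith
    · have ha' : (a : ℝ) ≤ 0 := by exact_mod_cast (by omega : a ≤ 0)
      nlinarith

lemma succ_le (ε l c e : ℝ) (hε0 : 0 < ε) (hε1 : ε < 1) (he : e < 0) (hl : l < 1)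
    (x : ℝ) (a b : ℤ) (hx : x ∈ Set.Ico c (c + l))
    (hy : x + (a + b * ε) ∈ Set.Ico c (c + l)) (h : 0 < (a : ℝ) + b * e) :
    stepD ε l c e x ≤ a + b * e := by
  obtain ⟨hx1, hx2⟩ := hx
  obtain ⟨hy1, hy2⟩ := hy
  obtain ⟨hm, hn⟩ := signs ε e hε0 hε1 he a b (by linarith) (by linarith) h.le
  obtain ⟨n, hn'⟩ : ∃ n : ℤ, n = -a - b := ⟨_, rfl⟩
  have hb : b = -a - n := by omega
  rw [← hn'] at hn
  subst hb
  push_cast at *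
  have hne : ¬ (a = 0 ∧ n = 0) := by
    rintro ⟨rfl, rfl⟩
    simp at h
  have hm0 : (0 : ℝ) ≤ a := by exact_mod_cast hm
  have hn0 : (0 : ℝ) ≤ n := by exact_mod_cast hn
  have case_m : a = 0 → x < c + ε → False := by
    intro h0 hlt
    have : (1 : ℝ) ≤ n := by exact_mod_cast (by omega : 1 ≤ n)
    subst h0
    push_cast at *
    nlinarith
  have case_n : n = 0 → c + l - 1 + ε ≤ x → False := by
    intro h0 hlt
    have : (1 : ℝ) ≤ a := by exact_mod_cast (by omega : 1 ≤ a)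
    subst h0
    push_cast at *
    nlinarith
  unfold stepD
  split_ifs with h1 h2
  · have : (1 : ℝ) ≤ a := by
      by_contra hcon
      exact case_m (by
        have : ¬ (1 ≤ a) := fun hh => hcon (by exact_mod_cast hh)
        omega) (by linarith)
    nlinarith
  · have h3 : (1 : ℝ) ≤ a := by
      by_contra hcon
      exact case_m (by
        have : ¬ (1 ≤ a) := fun hh => hcon (by exact_mod_cast hh)
        omega) (by linarith)
    have h4 : (1 : ℝ) ≤ n := by
      by_contra hcon
      exact case_n (by
        have : ¬ (1 ≤ n) := fun hh => hcon (by exact_mod_cast hh)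
        omega) (by linarith)
    nlinarith
  · have h4 : (1 : ℝ) ≤ n := by
      by_contra hcon
      exact case_n (by
        have : ¬ (1 ≤ n) := fun hh => hcon (by exact_mod_cast hh)
        omega) (by linarith)
    nlinarith

lemma reach (ε l c e : ℝ) (hε0 : 0 < ε) (hε1 : ε < 1) (he : e < 0) (h1 : ε < l)
    (h2 : 1 - ε < l) (hl : l < 1) (n : ℕ) : ∀ (x : ℝ) (a b : ℤ), x ∈ Set.Ico c (c + l) →
    x + (a + b * ε) ∈ Set.Ico c (c + l) → 0 ≤ (a : ℝ) + b * e → (a : ℝ) + b * e < n * (-e) →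
    ∃ k : ℕ, (T3 ε l c)^[k] x = x + (a + b * ε) := by
  induction n with
  | zero => intro x a b _ _ h3 h4; simp at h4; linarith
  | succ n ih =>
    intro x a b hx hy h3 h4
    rcases h3.eq_or_lt with h0 | h0
    · refine ⟨0, ?_⟩
      obtain ⟨hx1, hx2⟩ := hx
      obtain ⟨hy1, hy2⟩ := hy
      have s1 := signs ε e hε0 hε1 he a b (by linarith) (by linarith) h3
      have s2 := signs ε e hε0 hε1 he (-a) (-b) (by push_cast; linarith)
        (by push_cast; linarith) (by push_cast; linarith)
      have ha : a = 0 := by omega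
      have hb : b = 0 := by omega
      subst ha hb
      simp
    · have hs := succ_le ε l c e hε0 hε1 he hl x a b hx hy h0
      obtain ⟨a1, b1, hab⟩ := stepD_int ε l c x
      have hT : T3 ε l c x = x + (a1 + b1 * ε) := by rw [T3_eq, hab]
      have hge := stepD_ge ε l c e x he
      rw [hab] at hs hge
      have e1 : T3 ε l c x + (((a - a1 : ℤ) : ℝ) + ((b - b1 : ℤ) : ℝ) * ε)
          = x + (a + b * ε) := by
        rw [hT]; push_cast; ring
      obtain ⟨k, hk⟩ := ih (T3 ε l c x) (a - a1) (b - b1) (T3_mem ε l c x h1 h2 hl hx)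
        (by rw [e1]; exact hy) (by push_cast; linarith) (by push_cast at *; linarith)
      exact ⟨k + 1, by rw [Function.iterate_succ_apply, hk, e1]⟩

lemma fwd (ε l c e : ℝ) (he : e < 0) (h1 : ε < l) (h2 : 1 - ε < l) (hl : l < 1)
    (x : ℝ) (hx : x ∈ Set.Ico c (c + l)) (k : ℕ) :
    (T3 ε l c)^[k] x ∈ Set.Ico c (c + l) ∧
    ∃ a b : ℤ, (T3 ε l c)^[k] x = x + (a + b * ε) ∧ (k : ℝ) * (-e) ≤ a + b * e := by
  induction k with
  | zero => exact ⟨hx, 0, 0, by simp, by simp⟩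
  | succ k ih =>
    obtain ⟨hm, a, b, hk, hge⟩ := ih
    rw [Function.iterate_succ_apply']
    refine ⟨T3_mem ε l c _ h1 h2 hl hm, ?_⟩
    obtain ⟨a1, b1, hab⟩ := stepD_int ε l c ((T3 ε l c)^[k] x)
    have hge1 := stepD_ge ε l c e ((T3 ε l c)^[k] x) he
    rw [hab] at hge1
    refine ⟨a + a1, b + b1, ?_, ?_⟩
    · rw [T3_eq, hab, hk]; push_cast; ring
    · push_cast; linarith

lemma ratcoord {ε : ℝ} (hε : Irrational ε) (s t u v : ℚ)
    (h : (s : ℝ) + t * ε = u + v * ε) : s = u ∧ t = v := by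
  have htv : t = v := by
    by_contra hne
    apply hε
    have : (t : ℝ) - v ≠ 0 := by
      intro h0; apply hne; exact_mod_cast (sub_eq_zero.mp h0)
    refine ⟨(u - s) / (t - v), ?_⟩
    push_cast
    rw [div_eq_iff this]; linarith
  subst htv
  refine ⟨?_, rfl⟩
  have : (s : ℝ) = u := by linarith
  exact_mod_cast this

lemma intcoord {ε : ℝ} (hε : Irrational ε) (s t u v : ℤ)
    (h : (s : ℝ) + t * ε = u + v * ε) : s = u ∧ t = v := by
  have := ratcoord hε s t u v (by push_cast; exact h)
  exact_mod_cast this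

/-- Conjugation is multiplicative. -/
lemma quad_conj_mul {ε : ℝ} (hε : Irrational ε) (β γ : ℚ) (hquad : ε ^ 2 + β * ε + γ = 0)
    (p r s t u v : ℚ) (h : ((p : ℝ) + r * ε) * (s + t * ε) = u + v * ε) :
    ((p : ℝ) + r * (-β - ε)) * (s + t * (-β - ε)) = u + v * (-β - ε) := by
  have hh := ratcoord hε (p * s - r * t * γ) (p * t + r * s - r * t * β) u v (by
    push_cast
    rw [← h]
    linear_combination (-(r : ℝ) * t) * hquad)
  obtain ⟨rfl, rfl⟩ := hh
  push_cast
  linear_combination ((r : ℝ) * t) * hquad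

set_option maxHeartbeats 1000000 in
theorem ancestor_iff_conjugate_nonpos (ε : ℝ) (A B C : ℤ) (hA : A ≠ 0)
    (hε : Irrational ε) (hεm : ε ∈ Set.Ioo (0 : ℝ) 1)
    (hquad : (A : ℝ) * ε ^ 2 + (B : ℝ) * ε + (C : ℝ) = 0)
    (hconj : -(B : ℝ) / (A : ℝ) - ε < 0)
    (q : ℕ) (hq : 1 ≤ q) (l c : ℝ)
    (hl₁ : max ε (1 - ε) < l) (hl₂ : l < 1) (hc₁ : c ≤ 0) (hc₂ : 0 < c + l)
    (hlq : (q : ℝ) * l ∈ Zbr ε) (hcq : (q : ℝ) * c ∈ Zbr ε)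
    (p r : ℚ)
    (hunit : ((p : ℝ) + (r : ℝ) * ε) * ((p : ℝ) + (r : ℝ) * (-(B : ℝ) / (A : ℝ) - ε)) = 1 ∨
             ((p : ℝ) + (r : ℝ) * ε) * ((p : ℝ) + (r : ℝ) * (-(B : ℝ) / (A : ℝ) - ε)) = -1)
    (hsum : ∃ m : ℤ, ((p : ℝ) + (r : ℝ) * ε) + ((p : ℝ) + (r : ℝ) * (-(B : ℝ) / (A : ℝ) - ε))
      = (m : ℝ))
    (hΛ : 1 < (p : ℝ) + (r : ℝ) * ε)
    (hΛ' : (p : ℝ) + (r : ℝ) * (-(B : ℝ) / (A : ℝ) - ε) ∈ Set.Ioo (0 : ℝ) 1)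
    (hZ : (fun z => ((p : ℝ) + (r : ℝ) * ε) * z) '' Zbr ε = Zbr ε)
    (hclasses : ∀ i j : ℤ,
      (fun x => ((p : ℝ) + (r : ℝ) * (-(B : ℝ) / (A : ℝ) - ε)) * x) ''
          {x | ∃ w ∈ Zbr ε, x = ((i : ℝ) + (j : ℝ) * ε) / (q : ℝ) + w}
        = {x | ∃ w ∈ Zbr ε, x = ((i : ℝ) + (j : ℝ) * ε) / (q : ℝ) + w}) :
    ∀ z₀ : ℝ, ∀ s t : ℚ, z₀ = (s : ℝ) + (t : ℝ) * ε → (q : ℝ) * z₀ ∈ Zbr ε →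
      z₀ ∈ Set.Ico c (c + l) →
      (IsAncestor ε l c
          (Set.Ico (((p : ℝ) + (r : ℝ) * (-(B : ℝ) / (A : ℝ) - ε)) * c)
            (((p : ℝ) + (r : ℝ) * (-(B : ℝ) / (A : ℝ) - ε)) * (c + l)))
          z₀ (((p : ℝ) + (r : ℝ) * (-(B : ℝ) / (A : ℝ) - ε)) * z₀) ↔
        ((s : ℝ) + (t : ℝ) * (-(B : ℝ) / (A : ℝ) - ε) ≤ 0 ∧
          0 ≤ (if z₀ < c + l - 1 + ε then
                 (s : ℝ) + (t : ℝ) * (-(B : ℝ) / (A : ℝ) - ε) + 1 - (-(B : ℝ) / (A : ℝ) - ε)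
               else if z₀ < c + ε then
                 (s : ℝ) + (t : ℝ) * (-(B : ℝ) / (A : ℝ) - ε) + 1
                   - 2 * (-(B : ℝ) / (A : ℝ) - ε)
               else
                 (s : ℝ) + (t : ℝ) * (-(B : ℝ) / (A : ℝ) - ε)
                   - (-(B : ℝ) / (A : ℝ) - ε)))) := by
  intro z₀ s t hz hqz hzI
  obtain ⟨hε0, hε1⟩ := hεm
  have h1 : ε < l := lt_of_le_of_lt (le_max_left _ _) hl₁
  have h2 : 1 - ε < l := lt_of_le_of_lt (le_max_right _ _) hl₁
  have hAr : (A : ℝ) ≠ 0 := by exact_mod_cast hA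
  obtain ⟨β, hβ⟩ : ∃ β : ℚ, β = (B : ℚ) / A := ⟨_, rfl⟩
  obtain ⟨γ, hγ⟩ : ∃ γ : ℚ, γ = (C : ℚ) / A := ⟨_, rfl⟩
  have hβr : (β : ℝ) = (B : ℝ) / A := by rw [hβ]; push_cast; rfl
  have hγr : (γ : ℝ) = (C : ℝ) / A := by rw [hγ]; push_cast; rfl
  have hq2 : ε ^ 2 + β * ε + γ = 0 := by
    rw [hβr, hγr]; field_simp; linarith
  obtain ⟨e, hedef⟩ : ∃ e : ℝ, e = -(B : ℝ) / (A : ℝ) - ε := ⟨_, rfl⟩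
  have heβ : -(β : ℝ) - ε = e := by rw [hedef, hβr]; ring
  rw [← hedef] at hconj hunit hsum hΛ' hclasses ⊢
  -- the two multiplicativity statements
  have conjΛ : ∀ s t u v : ℚ, ((p : ℝ) + r * ε) * (s + t * ε) = u + v * ε →
      ((p : ℝ) + r * e) * (s + t * e) = u + v * e := by
    intro s t u v h
    have := quad_conj_mul hε β γ hq2 p r s t u v h
    rwa [heβ] at this
  have conjl : ∀ s t u v : ℚ, ((p : ℝ) + r * e) * (s + t * ε) = u + v * ε →
      ((p : ℝ) + r * ε) * (s + t * e) = u + v * e := by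
    intro s t u v h
    have := quad_conj_mul hε β γ hq2 (p - r * β) (-r) s t u v (by
      rw [← h, ← heβ]; push_cast; ring)
    rw [heβ] at this
    rw [← this, ← heβ]; push_cast; ring
  obtain ⟨Λ, hLdef⟩ : ∃ Λ : ℝ, Λ = (p : ℝ) + r * ε := ⟨_, rfl⟩
  obtain ⟨μ, hμdef⟩ : ∃ μ : ℝ, μ = (p : ℝ) + r * e := ⟨_, rfl⟩
  rw [← hLdef] at hunit hΛ hZ
  rw [← hμdef] at hunit hΛ' hclasses ⊢
  simp only [← hLdef, ← hμdef] at conjΛ conjl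
  obtain ⟨hμ0, hμ1⟩ := hΛ'
  have hone : Λ * μ = 1 := by
    rcases hunit with h | h
    · exact h
    · nlinarith [mul_pos (by linarith : 0 < Λ) hμ0]
  have mulΛ : ∀ a b : ℤ, ∃ a' b' : ℤ, Λ * (a + b * ε) = a' + b' * ε ∧
      μ * (a + b * e) = a' + b' * e := by
    intro a b
    have : Λ * (a + b * ε) ∈ Zbr ε := by
      rw [← hZ]; exact ⟨_, ⟨a, b, rfl⟩, rfl⟩
    obtain ⟨a', b', h⟩ := this
    refine ⟨a', b', h, ?_⟩
    have := conjΛ a b a' b' (by push_cast; exact h)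
    push_cast at this
    exact this
  have mull : ∀ a b : ℤ, ∃ a' b' : ℤ, μ * (a + b * ε) = a' + b' * ε ∧
      Λ * (a + b * e) = a' + b' * e := by
    intro a b
    have : (a + b * ε : ℝ) ∈ Zbr ε := ⟨a, b, rfl⟩
    rw [← hZ] at this
    obtain ⟨_, ⟨a', b', rfl⟩, h⟩ := this
    simp only at h
    have h' : μ * (a + b * ε) = a' + b' * ε := by
      rw [← h]; linear_combination ((a' : ℝ) + b' * ε) * hone
    refine ⟨a', b', h', ?_⟩
    have := conjl a b a' b' (by push_cast; exact h')
    push_cast at this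
    exact this
  obtain ⟨z', hz'⟩ : ∃ z' : ℝ, z' = (s : ℝ) + t * e := ⟨_, rfl⟩
  obtain ⟨a0, b0, hab0, hab0'⟩ : ∃ a0 b0 : ℤ, μ * z₀ = z₀ + (a0 + b0 * ε) ∧
      Λ * z' = z' + (a0 + b0 * e) := by
    obtain ⟨i, j, hij⟩ := hqz
    have hq0 : (q : ℝ) ≠ 0 := by
      have : q ≠ 0 := by omega
      exact_mod_cast this
    have hz0 : z₀ = ((i : ℝ) + j * ε) / q := by
      rw [eq_div_iff hq0]; linarith
    have hm : μ * z₀ ∈ (fun x => μ * x) ''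
        {x | ∃ w ∈ Zbr ε, x = ((i : ℝ) + (j : ℝ) * ε) / (q : ℝ) + w} :=
      ⟨z₀, ⟨0, ⟨0, 0, by simp⟩, by rw [hz0]; ring⟩, rfl⟩
    rw [hclasses i j] at hm
    obtain ⟨_, ⟨a0, b0, rfl⟩, h⟩ := hm
    rw [← hz0] at h
    refine ⟨a0, b0, h, ?_⟩
    have := conjl s t (s + a0) (t + b0) (by
      rw [← hz, h, hz]; push_cast; ring)
    rw [hz', this]; push_cast; ring
  have hfin : (if z₀ < c + l - 1 + ε then (s : ℝ) + t * e + 1 - e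
      else if z₀ < c + ε then (s : ℝ) + t * e + 1 - 2 * e
      else (s : ℝ) + t * e - e) = z' + stepD ε l c e z₀ := by
    rw [hz']; unfold stepD; split_ifs <;> ring
  rw [hfin, ← hz']
  obtain ⟨a1, b1, hD⟩ := stepD_int ε l c z₀
  have hT : T3 ε l c z₀ = z₀ + (a1 + b1 * ε) := by rw [T3_eq, hD]
  have hDge := stepD_ge ε l c e z₀ hconj
  have hTm := T3_mem ε l c z₀ h1 h2 hl₂ hzI
  have Jsub : ∀ y, y ∈ Set.Ico (μ * c) (μ * (c + l)) → y ∈ Set.Ico c (c + l) := by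
    rintro y ⟨hy1, hy2⟩
    have i1 := mul_nonneg (by linarith : 0 ≤ 1 - μ) (by linarith : 0 ≤ -c)
    have i2 := mul_nonneg (by linarith : 0 ≤ 1 - μ) hc₂.le
    constructor <;> linarith
  have Jmul : ∀ y, y ∈ Set.Ico c (c + l) → μ * y ∈ Set.Ico (μ * c) (μ * (c + l)) := by
    rintro y ⟨hy1, hy2⟩
    exact ⟨mul_le_mul_of_nonneg_left hy1 hμ0.le, mul_lt_mul_of_pos_left hy2 hμ0⟩
  have hμzI := Jsub _ (Jmul _ hzI)
  have reach' : ∀ (x : ℝ) (a b : ℤ), x ∈ Set.Ico c (c + l) →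
      x + (a + b * ε) ∈ Set.Ico c (c + l) → 0 ≤ (a : ℝ) + b * e →
      ∃ k : ℕ, (T3 ε l c)^[k] x = x + (a + b * ε) := by
    intro x a b hx hy h
    obtain ⟨n, hn⟩ := exists_nat_gt (((a : ℝ) + b * e) / (-e))
    rw [div_lt_iff₀ (by linarith)] at hn
    exact reach ε l c e hε0 hε1 hconj h1 h2 hl₂ n x a b hx hy h hn
  -- the difference of conjugates along an orbit
  have orbit : ∀ (x : ℝ) (a b : ℤ) (k : ℕ), x ∈ Set.Ico c (c + l) →
      (T3 ε l c)^[k] x = x + (a + b * ε) → (k : ℝ) * (-e) ≤ a + b * e := by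
    intro x a b k hx hk
    obtain ⟨_, a', b', h3, h4⟩ := fwd ε l c e hconj h1 h2 hl₂ x hx k
    obtain ⟨rfl, rfl⟩ := intcoord hε a b a' b' (by linarith)
    exact h4
  constructor
  · rintro ⟨_, k, hk, hnot⟩
    have hk0 := orbit (μ * z₀) (-a0) (-b0) k hμzI (by
      rw [hk, hab0]; push_cast; ring)
    push_cast at hk0
    have hkn : 0 ≤ (k : ℝ) * (-e) :=
      mul_nonneg (Nat.cast_nonneg k) (by linarith)
    have hz0 : z' ≤ 0 := by
      by_contra! hcon
      have := mul_pos (by linarith : 0 < Λ - 1) hcon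
      linarith
    refine ⟨hz0, ?_⟩
    by_contra! hneg
    obtain ⟨a2, b2, h3, h4⟩ := mull a1 b1
    have hJ := Jmul _ hTm
    have hI := Jsub _ hJ
    have e1 : μ * T3 ε l c z₀ = μ * z₀ + (a2 + b2 * ε) := by
      rw [hT, ← h3]; ring
    have e2 : μ * T3 ε l c z₀ = z₀ + (((a0 + a2 : ℤ) : ℝ) + ((b0 + b2 : ℤ) : ℝ) * ε) := by
      rw [e1, hab0]; push_cast; ring
    rw [hD] at hDge hneg
    have hpos : 0 < (a2 : ℝ) + b2 * e := by
      rw [← h4]; apply mul_pos <;> linarith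
    have hle : ((a0 + a2 : ℤ) : ℝ) + ((b0 + b2 : ℤ) : ℝ) * e ≤ 0 := by
      by_contra! hcon
      have := succ_le ε l c e hε0 hε1 hconj hl₂ z₀ _ _ hzI (by rw [← e2]; exact hI) hcon
      rw [hD] at this
      push_cast at this
      have hm := mul_neg_of_pos_of_neg (by linarith : 0 < Λ - 1) hneg
      linarith
    obtain ⟨j, hj⟩ := reach' (μ * z₀) a2 b2 hμzI (by rw [← e1]; exact hI) hpos.le
    have hj1 : 1 ≤ j := by
      by_contra! h0
      have : j = 0 := by omega
      subst this
      simp only [Function.iterate_zero, id] at hj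
      obtain ⟨rfl, rfl⟩ := intcoord hε 0 0 a2 b2 (by push_cast; linarith)
      simp at hpos
    have hjk : j ≤ k := by
      by_contra! hlt
      have hit : (T3 ε l c)^[j - k] z₀ = μ * T3 ε l c z₀ := by
        rw [← hk, ← Function.iterate_add_apply, Nat.sub_add_cancel hlt.le, hk, hj, e1]
      have := orbit z₀ _ _ (j - k) hzI (hit.trans e2)
      have h5 : (1 : ℝ) ≤ ((j - k : ℕ) : ℝ) := by exact_mod_cast (by omega : 1 ≤ j - k)
      have h6 := mul_le_mul_of_nonneg_right h5 (by linarith : 0 ≤ -e)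
      linarith
    exact hnot j hj1 hjk (by rw [hj, ← e1]; exact hJ)
  · rintro ⟨hz0, hT0⟩
    refine ⟨Jmul _ hzI, ?_⟩
    have e1 : μ * z₀ + (((-a0 : ℤ) : ℝ) + ((-b0 : ℤ) : ℝ) * ε) = z₀ := by
      rw [hab0]; push_cast; ring
    obtain ⟨k, hk⟩ := reach' (μ * z₀) (-a0) (-b0) hμzI (by rw [e1]; exact hzI)
      (by
        have := mul_nonneg (by linarith : 0 ≤ Λ - 1) (by linarith : 0 ≤ -z')
        push_cast; linarith)
    rw [e1] at hk
    refine ⟨k, hk, ?_⟩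
    intro j hj1 hjk hJ
    obtain ⟨hyI, a, b, hy, hge⟩ := fwd ε l c e hconj h1 h2 hl₂ _ hμzI j
    have hpos : 0 < (a : ℝ) + b * e := by
      have : (1 : ℝ) ≤ j := by exact_mod_cast hj1
      have h6 := mul_le_mul_of_nonneg_right this (by linarith : 0 ≤ -e)
      linarith
    obtain ⟨a3, b3, h3, h4⟩ := mulΛ a b
    have e3 : Λ * ((T3 ε l c)^[j] (μ * z₀)) = z₀ + (a3 + b3 * ε) := by
      rw [hy, ← h3]; linear_combination z₀ * hone
    have hI : z₀ + ((a3 : ℝ) + b3 * ε) ∈ Set.Ico c (c + l) := by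
      rw [← e3]
      obtain ⟨hJ1, hJ2⟩ := hJ
      have hL0 : 0 < Λ := by linarith
      have i1 := mul_le_mul_of_nonneg_left hJ1 hL0.le
      have i2 := mul_lt_mul_of_pos_left hJ2 hL0
      rw [← mul_assoc, hone, one_mul] at i1 i2
      exact ⟨i1, i2⟩
    have hs := succ_le ε l c e hε0 hε1 hconj hl₂ z₀ a3 b3 hzI hI
      (by rw [← h4]; exact mul_pos hμ0 hpos)
    have hit : (T3 ε l c)^[k - j] ((T3 ε l c)^[j] (μ * z₀)) = z₀ := by
      rw [← Function.iterate_add_apply, Nat.sub_add_cancel hjk, hk]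
    have hle := orbit ((T3 ε l c)^[j] (μ * z₀)) (-a0 - a) (-b0 - b) (k - j) hyI (by
      rw [hit, hy, hab0]; push_cast; ring)
    have hkn : 0 ≤ ((k - j : ℕ) : ℝ) * (-e) :=
      mul_nonneg (Nat.cast_nonneg _) (by linarith)
    push_cast at hle
    -- conjugate of the orbit point is at most that of the target
    have hy' : Λ * z' + (a + b * e) ≤ z' := by linarith
    have hmul := mul_le_mul_of_nonneg_left hy' hμ0.le
    have hmz : μ * (Λ * z' + (a + b * e)) = z' + (a3 + b3 * e) := by
      rw [← h4]; linear_combination z' * hone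
    rw [hmz] at hmul
    have hz1 : z' < 0 := by
      rcases hz0.eq_or_lt with h0 | h0
      · rw [h0] at hmul; linarith
      · exact h0
    have := mul_neg_of_pos_of_neg hμ0 hz1
    linarith
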